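/- Let n ≥ 2 be a natural number, let a₁,…,aₙ be real numbers, let τ̄₁,…,τ̄ₙ ≥ 0 and τᵢ ≥ 0 for a fixed index i, and let c̄ ≤ 0. Set a = Σⱼ aⱼ, q = min{τ̄₁,…,τ̄ₙ, τᵢ}, and Q = max{τ̄₁,…,τ̄ₙ, τᵢ}. Suppose (1) min_j aⱼ − (n/(n+1)) max_j aⱼ > 0, and (2) −((n² − n + 2)/(4(n+1))) · n · q + (n/2 + 1) Q < 0. Then the equilibrium control value uᵢ* = aᵢ − a/(n+1) − ((n² − n + 2)/(4(n+1))) c̄ Σⱼ τ̄ⱼ + (1/2) c̄ ((n/2) τ̄ᵢ + τᵢ) is nonnegative. -/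

import Mathlib

/-!
The control splits as `(aᵢ − a/(n+1)) + (−c̄) (K Σⱼ τ̄ⱼ − ½ ((n/2) τ̄ᵢ + τᵢ))` with
`K = (n²−n+2)/(4(n+1)) ≥ 0`, and both summands are nonnegative. For the first, `aᵢ ≥ min a`
and `a ≤ n max a`. For the second, `K Σⱼ τ̄ⱼ ≥ K n q > (n/2 + 1) Q ≥ (n/2) τ̄ᵢ + τᵢ`, which is
nonnegative and so dominates its own half.
-/

open Finset

/-- sufficient conditions for nonnegativity of the equilibrium control.
With `q = min{τ̄₁,…,τ̄ₙ, τᵢ}` and `Q = max{τ̄₁,…,τ̄ₙ, τᵢ}`, if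
`min_j aⱼ − (n/(n+1)) max_j aⱼ > 0` and
`−((n²−n+2)/(4(n+1))) n q + (n/2 + 1) Q < 0`, then for `c̄ ≤ 0` the control
`uᵢ* = aᵢ − a/(n+1) − ((n²−n+2)/(4(n+1))) c̄ Σⱼ τ̄ⱼ + (1/2) c̄ ((n/2) τ̄ᵢ + τᵢ)`
is nonnegative. -/
theorem equilibrium_control_nonneg (n : ℕ) (hn : 2 ≤ n)
    (a τbar : Fin n → ℝ) (i : Fin n) (τᵢ : ℝ)
    (hτbar : ∀ j, 0 ≤ τbar j) (hτᵢ : 0 ≤ τᵢ)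
    (cbar : ℝ) (hcbar : cbar ≤ 0)
    (hne : (univ : Finset (Fin n)).Nonempty)
    (ha : 0 < univ.inf' hne a - ((n : ℝ) / ((n : ℝ) + 1)) * univ.sup' hne a)
    (hτ : -(((n : ℝ) ^ 2 - (n : ℝ) + 2) / (4 * ((n : ℝ) + 1))) * (n : ℝ) *
            (min (univ.inf' hne τbar) τᵢ) +
          ((n : ℝ) / 2 + 1) * (max (univ.sup' hne τbar) τᵢ) < 0) :
    0 ≤ a i - (∑ j, a j) / ((n : ℝ) + 1) -
        (((n : ℝ) ^ 2 - (n : ℝ) + 2) / (4 * ((n : ℝ) + 1))) * cbar * (∑ j, τbar j) +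
        (1 / 2) * cbar * (((n : ℝ) / 2) * τbar i + τᵢ) := by
  set K : ℝ := ((n : ℝ) ^ 2 - (n : ℝ) + 2) / (4 * ((n : ℝ) + 1)) with hK
  set q := min (univ.inf' hne τbar) τᵢ with hq
  set Q := max (univ.sup' hne τbar) τᵢ with hQ
  have hn0 : (0 : ℝ) ≤ n := Nat.cast_nonneg n
  have hK0 : 0 ≤ K := by
    apply div_nonneg
    · nlinarith [sq_nonneg ((n : ℝ) - 1)]
    · positivity
  have hmin : univ.inf' hne a ≤ a i := inf'_le a (mem_univ i)
  have hsum_a : ∑ j, a j ≤ n * univ.sup' hne a := by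
    simpa using sum_le_card_nsmul univ a _ fun j hj => le_sup' a hj
  have hpart_a : 0 ≤ a i - (∑ j, a j) / ((n : ℝ) + 1) := by
    have h : (∑ j, a j) / ((n : ℝ) + 1) ≤ (n : ℝ) / ((n : ℝ) + 1) * univ.sup' hne a := by
      rw [div_mul_eq_mul_div]
      gcongr
    linarith
  have hsum_τ : n * q ≤ ∑ j, τbar j := by
    simpa using card_nsmul_le_sum univ τbar q
      fun j hj => (min_le_left _ _).trans (inf'_le τbar hj)
  have hτbarQ : τbar i ≤ Q := (le_sup' τbar (mem_univ i)).trans (le_max_left _ _)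
  have hτᵢQ : τᵢ ≤ Q := le_max_right _ _
  have hpart_τ : 0 ≤ K * (∑ j, τbar j) - (1 / 2) * ((n : ℝ) / 2 * τbar i + τᵢ) := by
    have h1 : K * (n * q) ≤ K * ∑ j, τbar j := by gcongr
    have h2 : (n : ℝ) / 2 * τbar i ≤ (n : ℝ) / 2 * Q := by gcongr
    have h3 : 0 ≤ (n : ℝ) / 2 * τbar i := mul_nonneg (by positivity) (hτbar i)
    linarith
  linarith [mul_nonneg (neg_nonneg.mpr hcbar) hpart_τ]
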